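/- For every ε ∈ (0,1) and C_U > 0 there exist κ > 0, δ > 0, A > 0 and x₀ such that for all x ≥ x₀ and all integers M ≤ κ·x^{1/5}: #{m : 1 ≤ m ≤ U, every prime factor of m is ≤ y, gcd(m − 1, P_M(y)) = 1} ≤ A·x/(log x)^{1+δ}. -/

import Mathlib

open scoped Classical

/-- `y = exp((1−ε)·log x·log₃x/log₂x)`. -/
noncomputable def yy (ε x : ℝ) : ℝ :=
  Real.exp ((1 - ε) * Real.log x * Real.log^[3] x / Real.log^[2] x)

/-- `z = x/log₂ x`. -/
noncomputable def zz (x : ℝ) : ℝ := x / Real.log^[2] x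

/-- `U = C_U·(φ(M)/M)·x·log y/log₂ x`. -/
noncomputable def UU (CU : ℝ) (M : ℕ) (ε x : ℝ) : ℝ :=
  CU * ((M.totient : ℝ) / (M : ℝ)) * x * Real.log (yy ε x) / Real.log^[2] x

/-- `P_M(t) = ∏_{p ≤ t, p ∤ M} p`. -/
noncomputable def PM (M : ℕ) (t : ℝ) : ℕ :=
  ∏ p ∈ (Finset.range (⌊t⌋₊ + 1)).filter (fun p : ℕ => p.Prime ∧ ¬ p ∣ M), p

/-!
Put `V = x * log x`, which eventually exceeds `U`. Unless a counted `m` is `t`-smooth it factors as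
`m = k * q` with `q` a prime in `(t, y]` and `k ≤ V / t` a `y`-smooth integer. For fixed `k` both
`q` and `k * q - 1` avoid the primes in `(w, z]` not dividing `M * k`, and Brun's pure sieve gives
`≪ min y (V / k) * (log w / log z) ^ 2` such `q`, up to a remainder. The minimum is at most
`y ^ α * (V / k) ^ (1 - α)`, whose sum over `k` Rankin's method controls. With
`α = (1 + ε / 2) * log log x / log x` this saves `x ^ α = (log x) ^ (1 + ε / 2)`, while the Euler
product costs only a small power of `log x` because `y ^ α ≤ (log log x) ^ (1 - ε / 2)`. Taking
`w = log x` and `log z`, `log t` slightly smaller powers of `log x` absorbs all other losses.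
-/

section Mertens

open Finset Real

lemma prod_primesLE_pow_div_dvd_factorial (n : ℕ) :
    ∏ p ∈ n.primesLE, p ^ (n / p) ∣ n.factorial := by
  refine prod_dvd_of_isRelPrime (fun p hp q hq hpq => ?_) fun p hp => ?_
  · have hp' := Nat.prime_of_mem_primesLE (mem_coe.1 hp)
    have hq' := Nat.prime_of_mem_primesLE (mem_coe.1 hq)
    exact Nat.coprime_iff_isRelPrime.1 (((Nat.coprime_primes hp' hq').2 hpq).pow _ _)
  · rw [(Nat.prime_of_mem_primesLE hp).pow_dvd_factorial_iff (b := Nat.log p n + 2) (by omega)]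
    simpa using single_le_sum (f := fun i => n / p ^ i) (s := Ico 1 (Nat.log p n + 2))
      (fun i _ => Nat.zero_le _) (a := 1) (by simp)

lemma sum_primesLE_div_mul_log_le (n : ℕ) :
    ∑ p ∈ n.primesLE, ((n / p : ℕ) : ℝ) * log p ≤ n * log n := by
  have prime_pow_ne_zero : ∀ p ∈ n.primesLE, (p : ℝ) ^ (n / p) ≠ 0 := fun p hp =>
    pow_ne_zero _ (Nat.cast_ne_zero.2 (Nat.prime_of_mem_primesLE hp).ne_zero)
  calc ∑ p ∈ n.primesLE, ((n / p : ℕ) : ℝ) * log p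
      = log ((∏ p ∈ n.primesLE, p ^ (n / p) : ℕ) : ℝ) := by
        push_cast
        simp only [log_prod prime_pow_ne_zero, log_pow]
    _ ≤ log ((n : ℝ) ^ n) := by
        refine log_le_log ?_ ?_
        · push_cast
          exact (prod_nonneg fun p _ => by positivity).lt_of_ne'
            (prod_ne_zero_iff.2 prime_pow_ne_zero)
        · exact_mod_cast (Nat.le_of_dvd n.factorial_pos
            (prod_primesLE_pow_div_dvd_factorial n)).trans n.factorial_le_pow
    _ = n * log n := log_pow _ _

lemma sum_primesLE_log_div_le (n : ℕ) :
    ∑ p ∈ n.primesLE, log p / p ≤ log n + log 4 := by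
  rcases n.eq_zero_or_pos with rfl | hn
  · simpa using log_nonneg (by norm_num : (1 : ℝ) ≤ 4)
  have hn' : (0 : ℝ) < n := by exact_mod_cast hn
  have theta_le : ∑ p ∈ n.primesLE, log p ≤ log 4 * n := by
    rw [← Chebyshev.theta_eq_sum_primesLE_log]
    exact Chebyshev.theta_le_log4_mul_x hn'.le
  refine le_of_mul_le_mul_left ?_ hn'
  calc n * ∑ p ∈ n.primesLE, log p / p
      ≤ ∑ p ∈ n.primesLE, (((n / p : ℕ) : ℝ) * log p + log p) := by
        rw [mul_sum]
        refine sum_le_sum fun p _ => ?_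
        have hfloor := (Nat.lt_floor_add_one ((n : ℝ) / p)).le
        rw [Nat.floor_div_eq_div] at hfloor
        calc (n : ℝ) * (log p / p) = n / p * log p := by ring
          _ ≤ (((n / p : ℕ) : ℝ) + 1) * log p := by gcongr
          _ = _ := by ring
    _ ≤ n * (log n + log 4) := by
        rw [sum_add_distrib]
        linarith [sum_primesLE_div_mul_log_le n]

lemma sum_primesLE_succ (f : ℕ → ℝ) (n : ℕ) :
    ∑ p ∈ (n + 1).primesLE, f p
      = ∑ p ∈ n.primesLE, f p + if (n + 1).Prime then f (n + 1) else 0 := by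
  simp only [Nat.primesLE_eq_filter_range, sum_filter, sum_range_succ]

-- Partial summation against `1 / log n`: the left side grows by `(1 / log n - 1 / log (n + 1))`
-- times the sum of `log p / p`, which is at most `log n + log 4`.
lemma sum_primesLE_inv_sub_le {n : ℕ} (hn : 2 ≤ n) :
    ∑ p ∈ n.primesLE, (p : ℝ)⁻¹ - (∑ p ∈ n.primesLE, log p / p) / log n ≤
      log (log n) - log (log 2) + 2 - log 4 / log n := by
  have hlog4 : log 4 = 2 * log 2 := by
    rw [show (4 : ℝ) = 2 ^ 2 by norm_num, log_pow]; norm_num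
  induction n, hn using Nat.le_induction with
  | base =>
    have hlog2 : log 2 ≠ 0 := (log_pos one_lt_two).ne'
    rw [show Nat.primesLE 2 = {2} by decide, hlog4]
    simp only [sum_singleton, Nat.cast_ofNat]
    field_simp
    linarith
  | succ n hn ih =>
    have hn1 : (1 : ℝ) < n := by exact_mod_cast hn
    have ha : 0 < log n := log_pos hn1
    have hab : log n < log (n + 1 : ℕ) := log_lt_log (by linarith) (by push_cast; linarith)
    have hA := sum_primesLE_log_div_le n
    rw [sum_primesLE_succ, sum_primesLE_succ]
    set a := log n
    set b := log (n + 1 : ℕ)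
    set S := ∑ p ∈ n.primesLE, (p : ℝ)⁻¹
    set A := ∑ p ∈ n.primesLE, log p / p
    have hb : 0 < b := ha.trans hab
    have drop_last : (S + if (n + 1).Prime then ((n + 1 : ℕ) : ℝ)⁻¹ else 0) -
        (A + if (n + 1).Prime then b / (n + 1 : ℕ) else 0) / b = S - A / b := by
      split_ifs
      · field_simp; ring
      · simp
    have weight_nonneg : 0 ≤ a⁻¹ - b⁻¹ := sub_nonneg.2 (inv_anti₀ ha hab.le)
    have log_ratio : 1 - a / b ≤ log b - log a := by
      have := log_le_sub_one_of_pos (div_pos ha hb)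
      rw [log_div ha.ne' hb.ne'] at this
      linarith
    calc _ = (S - A / a) + A * (a⁻¹ - b⁻¹) := by rw [drop_last]; ring
      _ ≤ (S - A / a) + (a + log 4) * (a⁻¹ - b⁻¹) := by gcongr
      _ = (S - A / a) + (1 - a / b) + log 4 / a - log 4 / b := by field_simp; ring
      _ ≤ _ := by linarith

lemma sum_primesLE_inv_le {n : ℕ} (hn : 2 ≤ n) :
    ∑ p ∈ n.primesLE, (p : ℝ)⁻¹ ≤ log (log n) + 4 := by
  have hlog : 0 < log n := log_pos (by exact_mod_cast hn)
  have hA : (∑ p ∈ n.primesLE, log p / p) / log n ≤ 1 + log 4 / log n := by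
    rw [← div_self hlog.ne', ← add_div]
    gcongr
    exact sum_primesLE_log_div_le n
  have loglog_two : -1 ≤ log (log 2) := by
    rw [le_log_iff_exp_le (log_pos one_lt_two)]
    linarith [exp_neg_one_lt_d9, log_two_gt_d9]
  linarith [sum_primesLE_inv_sub_le hn]

end Mertens

section Rankin

open Finset Real

lemma sum_rpow_neg_le_prod_primesLE {σ : ℝ} (hσ : 0 < σ) {n : ℕ} {T : Finset ℕ}
    (hT : ∀ m ∈ T, m ∈ (n + 1).smoothNumbers) :
    ∑ m ∈ T, (m : ℝ) ^ (-σ) ≤ ∏ p ∈ n.primesLE, (1 - (p : ℝ) ^ (-σ))⁻¹ := by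
  let f : ℕ →* ℝ :=
    { toFun := fun m => (m : ℝ) ^ (-σ)
      map_one' := by simp
      map_mul' := fun a b => by
        push_cast
        exact mul_rpow a.cast_nonneg b.cast_nonneg }
  have norm_lt_one : ∀ {p : ℕ}, p.Prime → ‖f p‖ < 1 := fun {p} hp => by
    change ‖(p : ℝ) ^ (-σ)‖ < 1
    rw [norm_of_nonneg (by positivity)]
    exact rpow_lt_one_of_one_lt_of_neg (by exact_mod_cast hp.one_lt) (neg_lt_zero.2 hσ)
  have euler_product :=
    (EulerProduct.summable_and_hasSum_smoothNumbers_prod_primesBelow_geometric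
      norm_lt_one (n + 1)).2
  calc ∑ m ∈ T, (m : ℝ) ^ (-σ) = ∑ m ∈ T.subtype (· ∈ (n + 1).smoothNumbers), f m := by
        rw [sum_subtype_eq_sum_filter (f := f), filter_true_of_mem hT]; rfl
    _ ≤ _ := sum_le_hasSum _ (fun m _ => rpow_nonneg m.1.cast_nonneg _) euler_product

lemma inv_one_sub_le_exp {u : ℝ} (hu : u ≤ 3 / 5) : (1 - u)⁻¹ ≤ exp (u + 3 * u ^ 2) := by
  refine le_trans ?_ (add_one_le_exp _)
  rw [inv_le_iff_one_le_mul₀ (by linarith)]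
  nlinarith [mul_nonneg (sq_nonneg u) (sub_nonneg.2 hu)]

lemma rpow_neg_le_three_fifths {σ x : ℝ} (hσ : 3 / 4 ≤ σ) (hx : 2 ≤ x) : x ^ (-σ) ≤ 3 / 5 := by
  have five_thirds_le : (5 / 3 : ℝ) ≤ 2 ^ (3 / 4 : ℝ) := by
    refine le_of_pow_le_pow_left₀ (n := 4) (by norm_num) (by positivity) ?_
    rw [← rpow_mul_natCast (by norm_num)]
    norm_num
  calc x ^ (-σ) ≤ 2 ^ (-σ) := rpow_le_rpow_of_nonpos (by norm_num) hx (by linarith)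
    _ ≤ 2 ^ (-(3 / 4 : ℝ)) := rpow_le_rpow_of_exponent_le (by norm_num) (by linarith)
    _ ≤ 3 / 5 := by
      rw [rpow_neg (by norm_num), inv_le_comm₀ (by positivity) (by norm_num)]
      linarith

lemma exists_prod_inv_one_sub_rpow_neg_le : ∃ C : ℝ, ∀ σ : ℝ, 3 / 4 ≤ σ → ∀ n : ℕ,
    ∏ p ∈ n.primesLE, (1 - (p : ℝ) ^ (-σ))⁻¹ ≤ exp (∑ p ∈ n.primesLE, (p : ℝ) ^ (-σ) + C) := by
  have hsum : Summable fun m : ℕ => (m : ℝ) ^ (-(3 / 2) : ℝ) :=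
    summable_nat_rpow.2 (by norm_num)
  refine ⟨3 * ∑' m : ℕ, (m : ℝ) ^ (-(3 / 2) : ℝ), fun σ hσ n => ?_⟩
  have factor_le : ∀ p ∈ n.primesLE,
      (1 - (p : ℝ) ^ (-σ))⁻¹ ≤ exp ((p : ℝ) ^ (-σ) + 3 * (p : ℝ) ^ (-(3 / 2) : ℝ)) := by
    intro p hp
    have hp2 : (2 : ℝ) ≤ p := by exact_mod_cast (Nat.prime_of_mem_primesLE hp).two_le
    refine (inv_one_sub_le_exp (rpow_neg_le_three_fifths hσ hp2)).trans ?_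
    gcongr
    rw [← rpow_mul_natCast p.cast_nonneg]
    exact rpow_le_rpow_of_exponent_le (by linarith) (by push_cast; linarith)
  calc ∏ p ∈ n.primesLE, (1 - (p : ℝ) ^ (-σ))⁻¹
      ≤ ∏ p ∈ n.primesLE, exp ((p : ℝ) ^ (-σ) + 3 * (p : ℝ) ^ (-(3 / 2) : ℝ)) := by
        refine prod_le_prod (fun p hp => ?_) factor_le
        have := rpow_neg_le_three_fifths hσ
          (Nat.ofNat_le_cast.2 (Nat.prime_of_mem_primesLE hp).two_le)
        exact inv_nonneg.2 (by linarith)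
    _ = exp (∑ p ∈ n.primesLE, (p : ℝ) ^ (-σ)
          + 3 * ∑ p ∈ n.primesLE, (p : ℝ) ^ (-(3 / 2) : ℝ)) := by
        rw [← exp_sum, sum_add_distrib, mul_sum]
    _ ≤ _ := by
        gcongr
        linarith [hsum.sum_le_tsum n.primesLE fun m _ => by positivity]

lemma exists_loglog_sub_le_sum_primesLE_inv : ∃ C : ℝ, ∀ n : ℕ, 2 ≤ n →
    log (log n) - C ≤ ∑ p ∈ n.primesLE, (p : ℝ)⁻¹ := by
  obtain ⟨C, prod_le⟩ := exists_prod_inv_one_sub_rpow_neg_le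
  refine ⟨C, fun n hn => ?_⟩
  have hn1 : (1 : ℝ) < n := by exact_mod_cast hn
  have log_le_harmonic : log n ≤ ∑ m ∈ Icc 1 n, (m : ℝ) ^ (-1 : ℝ) := by
    have := log_add_one_le_harmonic n
    rw [harmonic_eq_sum_Icc] at this
    push_cast at this
    simp only [rpow_neg_one]
    exact (log_le_log (by linarith) (by linarith)).trans this
  have smooth : ∀ m ∈ Icc 1 n, m ∈ (n + 1).smoothNumbers := fun m hm =>
    Nat.mem_smoothNumbers_of_lt (by grind) (by grind)
  have := log_le_log (log_pos hn1) <| (log_le_harmonic.trans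
    (sum_rpow_neg_le_prod_primesLE one_pos smooth)).trans (prod_le 1 (by norm_num) n)
  rw [log_exp] at this
  simp only [rpow_neg_one] at this
  linarith

lemma rpow_le_one_add_mul_log {α x Y : ℝ} (hα : 0 ≤ α) (hx : 1 ≤ x) (hxY : x ≤ Y) :
    x ^ α ≤ 1 + α * Y ^ α * log x := by
  have hx0 : 0 < x := by linarith
  have hlog : 0 ≤ log x := log_nonneg hx
  have self_bound : x ^ α ≤ 1 + α * x ^ α * log x := by
    have h1 : 1 - log x * α ≤ x ^ (-α) := by
      rw [rpow_def_of_pos hx0, mul_neg]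
      exact one_sub_le_exp_neg _
    have h2 : x ^ (-α) * x ^ α = 1 := by rw [← rpow_add hx0]; simp
    nlinarith [rpow_pos_of_pos hx0 α]
  refine self_bound.trans ?_
  gcongr

lemma sum_primesLE_rpow_le {α Y : ℝ} (hα : 0 ≤ α) (hY : 2 ≤ Y) :
    ∑ p ∈ ⌊Y⌋₊.primesLE, (p : ℝ) ^ (-(1 - α))
      ≤ log (log Y) + 4 + 3 * (α * Y ^ α * log Y) := by
  have hn : 2 ≤ ⌊Y⌋₊ := Nat.le_floor (by exact_mod_cast hY)
  have hn1 : (1 : ℝ) < ⌊Y⌋₊ := by exact_mod_cast hn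
  have floor_le : (⌊Y⌋₊ : ℝ) ≤ Y := Nat.floor_le (by linarith)
  have log_floor_le : log ⌊Y⌋₊ ≤ log Y := log_le_log (by linarith) floor_le
  have log_four_le : log 4 ≤ 2 * log Y := by
    rw [show (4 : ℝ) = 2 ^ 2 by norm_num, log_pow]
    push_cast
    gcongr
  have term_le : ∀ p ∈ ⌊Y⌋₊.primesLE,
      (p : ℝ) ^ (-(1 - α)) ≤ (p : ℝ)⁻¹ + α * Y ^ α * (log p / p) := by
    intro p hp
    have hp1 : (1 : ℝ) ≤ p := by exact_mod_cast (Nat.prime_of_mem_primesLE hp).one_le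
    have hpY : (p : ℝ) ≤ Y :=
      (Nat.cast_le.2 (Nat.le_of_mem_primesLE hp)).trans floor_le
    calc (p : ℝ) ^ (-(1 - α)) = (p : ℝ) ^ α / p := by
          rw [neg_sub, rpow_sub_one (by linarith)]
      _ ≤ (1 + α * Y ^ α * log p) / p := by
          gcongr
          exact rpow_le_one_add_mul_log hα hp1 hpY
      _ = _ := by ring
  calc ∑ p ∈ ⌊Y⌋₊.primesLE, (p : ℝ) ^ (-(1 - α))
      ≤ ∑ p ∈ ⌊Y⌋₊.primesLE, (p : ℝ)⁻¹ + α * Y ^ α * ∑ p ∈ ⌊Y⌋₊.primesLE, log p / p := by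
        rw [mul_sum, ← sum_add_distrib]
        exact sum_le_sum term_le
    _ ≤ (log (log Y) + 4) + α * Y ^ α * (3 * log Y) := by
        have loglog_le : log (log ⌊Y⌋₊) ≤ log (log Y) := log_le_log (log_pos hn1) log_floor_le
        gcongr
        · exact (sum_primesLE_inv_le hn).trans (by linarith)
        · exact (sum_primesLE_log_div_le _).trans (by linarith)
    _ = _ := by ring

lemma exists_sum_smooth_rpow_le : ∃ C > 0, ∀ α Y : ℝ, 0 ≤ α → α ≤ 1 / 4 → 2 ≤ Y →
    ∀ T : Finset ℕ, (∀ m ∈ T, m ∈ (⌊Y⌋₊ + 1).smoothNumbers) →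
    ∑ m ∈ T, (m : ℝ) ^ (-(1 - α)) ≤ C * log Y * exp (3 * (α * Y ^ α * log Y)) := by
  obtain ⟨C, prod_le⟩ := exists_prod_inv_one_sub_rpow_neg_le
  refine ⟨exp (4 + C), exp_pos _, fun α Y hα hα' hY T hT => ?_⟩
  calc ∑ m ∈ T, (m : ℝ) ^ (-(1 - α))
      ≤ exp (∑ p ∈ ⌊Y⌋₊.primesLE, (p : ℝ) ^ (-(1 - α)) + C) :=
        (sum_rpow_neg_le_prod_primesLE (by linarith) hT).trans (prod_le _ (by linarith) _)
    _ ≤ exp (4 + C + log (log Y) + 3 * (α * Y ^ α * log Y)) := by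
        refine exp_le_exp.2 ?_
        linarith [sum_primesLE_rpow_le hα hY]
    _ = _ := by rw [exp_add, exp_add, exp_log (log_pos (by linarith))]

-- Rankin's trick with exponent `1 - 1 / log t`.
lemma exists_card_smoothNumbersUpTo_le : ∃ C > 0, ∀ V t : ℝ, 0 < V → exp 4 ≤ t →
    ((Nat.smoothNumbersUpTo ⌊V⌋₊ (⌊t⌋₊ + 1)).card : ℝ)
      ≤ C * (V * log t * exp (-(log V / log t))) := by
  obtain ⟨C, hC, sum_le⟩ := exists_sum_smooth_rpow_le
  refine ⟨C * exp (3 * exp 1), by positivity, fun V t hV ht => ?_⟩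
  have ht0 : 0 < t := (exp_pos 4).trans_le ht
  have four_le_log : 4 ≤ log t := (le_log_iff_exp_le ht0).2 ht
  have hlog : log t ≠ 0 := by linarith
  set α := 1 / log t with hα
  have hα1 : α ≤ 1 / 4 := one_div_le_one_div_of_le (by norm_num) four_le_log
  have α_log : α * log t = 1 := one_div_mul_cancel hlog
  have t_rpow : t ^ α = exp 1 := by
    rw [rpow_def_of_pos ht0, mul_comm, α_log]
  have one_le : ∀ m ∈ Nat.smoothNumbersUpTo ⌊V⌋₊ (⌊t⌋₊ + 1),
      1 ≤ V ^ (1 - α) * (m : ℝ) ^ (-(1 - α)) := by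
    intro m hm
    obtain ⟨hmV, hm⟩ := Nat.mem_smoothNumbersUpTo.1 hm
    have hm0 : (0 : ℝ) < m := Nat.cast_pos.2 (Nat.ne_zero_of_mem_smoothNumbers hm).bot_lt
    rw [rpow_neg hm0.le, ← div_eq_mul_inv, ← div_rpow hV.le hm0.le]
    exact one_le_rpow ((one_le_div hm0).2 ((Nat.le_floor_iff hV.le).1 hmV)) (by linarith)
  calc ((Nat.smoothNumbersUpTo ⌊V⌋₊ (⌊t⌋₊ + 1)).card : ℝ)
      ≤ ∑ m ∈ Nat.smoothNumbersUpTo ⌊V⌋₊ (⌊t⌋₊ + 1), V ^ (1 - α) * (m : ℝ) ^ (-(1 - α)) := by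
        simpa using card_nsmul_le_sum _ _ _ one_le
    _ ≤ V ^ (1 - α) * (C * log t * exp (3 * (α * t ^ α * log t))) := by
        rw [← mul_sum]
        gcongr
        exact sum_le α t (by positivity) hα1 (by linarith [add_one_le_exp (4 : ℝ)]) _
          fun m hm => (Nat.mem_smoothNumbersUpTo.1 hm).2
    _ = _ := by
        rw [t_rpow, mul_right_comm α, α_log, one_mul, rpow_def_of_pos hV,
          show log V * (1 - α) = log V + -(log V / log t) by rw [hα]; ring, exp_add, exp_log hV]
        ring

end Rankin

section BrunSieve

open Finset Real

variable {P S : Finset ℕ}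

lemma exists_forall_modEq_iff_modEq_prod (hne : ∀ p ∈ S, p ≠ 0)
    (hcop : (S : Set ℕ).Pairwise Nat.Coprime) (a : ℕ → ℕ) :
    ∃ r, ∀ n, (∀ p ∈ S, n ≡ a p [MOD p]) ↔ n ≡ r [MOD ∏ p ∈ S, p] := by
  obtain ⟨r, hr⟩ := Nat.chineseRemainderOfFinset a id S hne hcop
  refine ⟨r, fun n =>
    ⟨fun h => ?_, fun h p hp => (h.of_dvd (dvd_prod_of_mem _ hp)).trans (hr p hp)⟩⟩
  rw [Nat.modEq_iff_dvd]
  push_cast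
  exact prod_dvd_of_coprime (fun p hp q hq hpq => Nat.isCoprime_iff_coprime.2 (hcop hp hq hpq))
    fun p hp => Nat.modEq_iff_dvd.1 ((h p hp).trans (hr p hp).symm)

lemma abs_count_modEq_sub_le {d : ℕ} (hd : 0 < d) (N r : ℕ) :
    |(N.count (· ≡ r [MOD d]) : ℝ) - N / d| ≤ 1 := by
  have lt_div_add_one := Nat.lt_floor_add_one ((N : ℝ) / d)
  have div_le := Nat.floor_le (show 0 ≤ (N : ℝ) / d by positivity)
  rw [Nat.floor_div_eq_div] at lt_div_add_one div_le
  rw [Nat.count_modEq_card _ hd, abs_le]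
  push_cast
  split_ifs <;> constructor <;> norm_num <;> linarith

lemma abs_card_residues_eq_sub_le (hne : ∀ p ∈ S, p ≠ 0)
    (hcop : (S : Set ℕ).Pairwise Nat.Coprime) (c : ∀ p ∈ S, ZMod p) (N : ℕ) :
    |(#{n ∈ range N | ∀ p (hp : p ∈ S), (n : ZMod p) = c p hp} : ℝ) - N * ∏ p ∈ S, (p : ℝ)⁻¹|
      ≤ 1 := by
  obtain ⟨r, hr⟩ := exists_forall_modEq_iff_modEq_prod hne hcop
    fun p => if hp : p ∈ S then (c p hp).val else 0
  have single_class : ∀ n : ℕ, (∀ p (hp : p ∈ S), (n : ZMod p) = c p hp) ↔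
      n ≡ r [MOD ∏ p ∈ S, p] := fun n => by
    rw [← hr]
    refine forall₂_congr fun p hp => ?_
    have : NeZero p := ⟨hne p hp⟩
    rw [dif_pos hp, ← ZMod.natCast_eq_natCast_iff, ZMod.natCast_zmod_val]
  have := abs_count_modEq_sub_le (prod_pos fun p hp => (hne p hp).bot_lt) N r
  simpa only [single_class, Nat.count_eq_card_filter_range, prod_inv_distrib, ← div_eq_mul_inv,
    Nat.cast_prod] using this

lemma abs_card_residues_mem_sub_le (hne : ∀ p ∈ S, p ≠ 0)
    (hcop : (S : Set ℕ).Pairwise Nat.Coprime) (Ω : ∀ p : ℕ, Finset (ZMod p)) (N : ℕ) :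
    |(#{n ∈ range N | ∀ p ∈ S, (n : ZMod p) ∈ Ω p} : ℝ) - N * ∏ p ∈ S, (#(Ω p) : ℝ) / p|
      ≤ ∏ p ∈ S, (#(Ω p) : ℝ) := by
  have card_eq : #{n ∈ range N | ∀ p ∈ S, (n : ZMod p) ∈ Ω p} =
      ∑ c ∈ S.pi Ω, #{n ∈ range N | ∀ p (hp : p ∈ S), (n : ZMod p) = c p hp} := by
    rw [card_eq_sum_card_fiberwise (f := fun n p _ => (n : ZMod p)) (t := S.pi Ω)
      fun n hn => by simp_all]
    refine sum_congr rfl fun c hc => congrArg card ?_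
    rw [mem_pi] at hc
    ext n
    simp only [mem_filter, mem_range, funext_iff, and_assoc]
    exact and_congr_right fun _ =>
      ⟨fun h => h.2, fun h => ⟨fun p hp => h p hp ▸ hc p hp, h⟩⟩
  have card_pi : (#(S.pi Ω) : ℝ) = ∏ p ∈ S, (#(Ω p) : ℝ) := by rw [card_pi]; push_cast; rfl
  have main_eq : N * ∏ p ∈ S, (#(Ω p) : ℝ) / p = ∑ _c ∈ S.pi Ω, N * ∏ p ∈ S, (p : ℝ)⁻¹ := by
    simp only [sum_const, nsmul_eq_mul, card_pi, div_eq_mul_inv, prod_mul_distrib]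
    ring
  rw [card_eq, main_eq, ← card_pi, Nat.cast_sum, ← sum_sub_distrib]
  refine (abs_sum_le_sum_abs _ _).trans ?_
  simpa only [nsmul_eq_mul, mul_one] using
    sum_le_card_nsmul (S.pi Ω) _ 1 fun c _ => abs_card_residues_eq_sub_le hne hcop c N

lemma bonferroni_upper {α : Type*} (B : Finset α) (b : ℕ) :
    (if B = ∅ then 1 else 0 : ℝ) ≤ ∑ S ∈ B.powerset with #S ≤ 2 * b, (-1) ^ #S := by
  have sum_eq : ∑ S ∈ B.powerset with #S ≤ 2 * b, (-1 : ℝ) ^ #S =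
      ∑ j ∈ range (2 * b + 1), (-1) ^ j * ((#B).choose j : ℝ) := by
    rw [← sum_fiberwise_of_maps_to (g := card) (t := range (2 * b + 1))
      fun S hS => by grind]
    refine sum_congr rfl fun j hj => ?_
    have fiber : {S ∈ {S ∈ B.powerset | #S ≤ 2 * b} | #S = j} = powersetCard j B := by
      ext S; grind
    rw [fiber, sum_congr rfl fun S hS => by rw [(mem_powersetCard.1 hS).2], sum_const,
      card_powersetCard, nsmul_eq_mul, mul_comm]
  rw [sum_eq]
  rcases B.eq_empty_or_nonempty with rfl | hB
  · rw [sum_range_succ']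
    simp
  · obtain ⟨n, hn⟩ := Nat.exists_eq_add_one.2 hB.card_pos
    have alternating : ∑ j ∈ range (2 * b + 1), (-1 : ℝ) ^ j * ((n + 1).choose j : ℝ) =
        (-1) ^ (2 * b) * (n.choose (2 * b) : ℝ) := by
      exact_mod_cast Int.alternating_sum_range_choose_eq_choose (n := n) (m := 2 * b)
    rw [if_neg hB.ne_empty, hn, alternating, pow_mul]
    simp

lemma card_sifted_le_sum (hne : ∀ p ∈ P, p ≠ 0) (hcop : (P : Set ℕ).Pairwise Nat.Coprime)
    (Ω : ∀ p : ℕ, Finset (ZMod p)) (N b : ℕ) :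
    (#{n ∈ range N | ∀ p ∈ P, (n : ZMod p) ∉ Ω p} : ℝ)
      ≤ N * ∑ S ∈ P.powerset with #S ≤ 2 * b, ∏ p ∈ S, -((#(Ω p) : ℝ) / p)
        + ∑ S ∈ P.powerset with #S ≤ 2 * b, ∏ p ∈ S, (#(Ω p) : ℝ) := by
  have indicator_le : ∀ n : ℕ, (if ∀ p ∈ P, (n : ZMod p) ∉ Ω p then 1 else 0 : ℝ) ≤
      ∑ S ∈ P.powerset with #S ≤ 2 * b, if ∀ p ∈ S, (n : ZMod p) ∈ Ω p then (-1) ^ #S else 0 := by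
    intro n
    have := bonferroni_upper {p ∈ P | (n : ZMod p) ∈ Ω p} b
    rw [← sum_filter, filter_filter]
    refine le_of_eq_of_le ?_ (this.trans_eq (sum_congr ?_ fun _ _ => rfl))
    · simp only [filter_eq_empty_iff]
    · ext S
      grind
  have term_le : ∀ S ∈ P.powerset, (-1) ^ #S * (#{n ∈ range N | ∀ p ∈ S, (n : ZMod p) ∈ Ω p} : ℝ)
      ≤ N * ∏ p ∈ S, -((#(Ω p) : ℝ) / p) + ∏ p ∈ S, (#(Ω p) : ℝ) := by
    intro S hS
    have hSP := mem_powerset.1 hS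
    have := abs_le.1 (abs_card_residues_mem_sub_le (fun p hp => hne p (hSP hp))
      (hcop.mono (coe_subset.2 hSP)) Ω N)
    rw [prod_neg]
    rcases neg_one_pow_eq_or ℝ #S with h | h <;> rw [h] <;> linarith
  calc (#{n ∈ range N | ∀ p ∈ P, (n : ZMod p) ∉ Ω p} : ℝ)
      ≤ ∑ n ∈ range N, ∑ S ∈ P.powerset with #S ≤ 2 * b,
          if ∀ p ∈ S, (n : ZMod p) ∈ Ω p then (-1) ^ #S else 0 := by
        rw [card_filter]
        push_cast
        exact sum_le_sum fun n _ => indicator_le n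
    _ = ∑ S ∈ P.powerset with #S ≤ 2 * b,
          (-1) ^ #S * (#{n ∈ range N | ∀ p ∈ S, (n : ZMod p) ∈ Ω p} : ℝ) := by
        rw [sum_comm]
        refine sum_congr rfl fun S _ => ?_
        rw [← sum_filter, sum_const, nsmul_eq_mul, mul_comm]
    _ ≤ _ := by
        rw [mul_sum, ← sum_add_distrib]
        exact sum_le_sum fun S hS => term_le S (mem_filter.1 hS).1

lemma sum_powerset_card_le_prod_le {α : Type*} {f : α → ℝ} (hf : ∀ a, 0 ≤ f a) {Z : ℝ}
    (hZ : 1 ≤ Z) (s : Finset α) (k : ℕ) :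
    ∑ S ∈ s.powerset with #S ≤ k, ∏ a ∈ S, f a ≤ Z ^ k * ∏ a ∈ s, (1 + f a / Z) := by
  have hZ0 : 0 < Z := one_pos.trans_le hZ
  have prod_nonneg : ∀ S : Finset α, 0 ≤ ∏ a ∈ S, f a / Z := fun S =>
    prod_nonneg fun a _ => div_nonneg (hf a) hZ0.le
  rw [prod_one_add, mul_sum]
  refine (sum_le_sum fun S hS => ?_).trans
    (sum_le_sum_of_subset_of_nonneg (filter_subset _ _) fun S _ _ =>
      mul_nonneg (by positivity) (prod_nonneg S))
  calc ∏ a ∈ S, f a = Z ^ #S * ∏ a ∈ S, f a / Z := by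
        rw [← prod_const, ← prod_mul_distrib]
        exact prod_congr rfl fun a _ => (mul_div_cancel₀ _ hZ0.ne').symm
    _ ≤ Z ^ k * ∏ a ∈ S, f a / Z :=
        mul_le_mul_of_nonneg_right (pow_le_pow_right₀ hZ (mem_filter.1 hS).2) (prod_nonneg S)

lemma sum_powerset_card_le_prod_neg_le {α : Type*} {g : α → ℝ} (hg : ∀ a, 0 ≤ g a) {R : ℝ}
    (hR : 1 ≤ R) (s : Finset α) (k : ℕ) :
    ∑ S ∈ s.powerset with #S ≤ k, ∏ a ∈ S, -g a
      ≤ ∏ a ∈ s, (1 - g a) + (∏ a ∈ s, (1 + R * g a)) / R ^ k := by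
  have prod_nonneg : ∀ S : Finset α, 0 ≤ ∏ a ∈ S, g a := fun S => prod_nonneg fun a _ => hg a
  have truncation : ∀ S : Finset α, (if #S ≤ k then ∏ a ∈ S, -g a else 0) ≤
      ∏ a ∈ S, -g a + (∏ a ∈ S, R * g a) / R ^ k := by
    intro S
    rw [prod_mul_distrib, prod_const]
    split_ifs with h
    · exact le_add_of_nonneg_right (by have := prod_nonneg S; positivity)
    · have tail_le : ∏ a ∈ S, g a ≤ R ^ #S * (∏ a ∈ S, g a) / R ^ k := by
        rw [le_div_iff₀ (by positivity), mul_comm]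
        exact mul_le_mul_of_nonneg_right (pow_le_pow_right₀ hR (by omega)) (prod_nonneg S)
      have := neg_abs_le (∏ a ∈ S, -g a)
      rw [abs_prod, prod_congr rfl fun a _ => by rw [abs_neg, abs_of_nonneg (hg a)]] at this
      linarith
  simp only [sub_eq_add_neg, prod_one_add, sum_div, ← sum_add_distrib, sum_filter]
  exact sum_le_sum fun S _ => truncation S

-- Brun's pure sieve. `R` damps the terms dropped by truncating inclusion-exclusion at sets of
-- `2 * b` primes, `Z` those kept in the remainder.
lemma card_sifted_le (hne : ∀ p ∈ P, p ≠ 0) (hcop : (P : Set ℕ).Pairwise Nat.Coprime)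
    (Ω : ∀ p : ℕ, Finset (ZMod p)) {R Z : ℝ} (hR : 1 ≤ R) (hZ : 1 ≤ Z) (N b : ℕ) :
    (#{n ∈ range N | ∀ p ∈ P, (n : ZMod p) ∉ Ω p} : ℝ)
      ≤ N * (∏ p ∈ P, (1 - (#(Ω p) : ℝ) / p)
          + (∏ p ∈ P, (1 + R * ((#(Ω p) : ℝ) / p))) / R ^ (2 * b))
        + Z ^ (2 * b) * ∏ p ∈ P, (1 + (#(Ω p) : ℝ) / Z) := by
  refine (card_sifted_le_sum hne hcop Ω N b).trans ?_
  gcongr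
  · exact sum_powerset_card_le_prod_neg_le (fun p => by positivity) hR P _
  · exact sum_powerset_card_le_prod_le (fun p => by positivity) hZ P _

end BrunSieve

section TwinSieve

open Finset Real

/-- The primes `w < p ≤ z` not dividing `Q`, by which the sieve removes residue classes. -/
noncomputable def siftingPrimes (Q : ℕ) (w z : ℝ) : Finset ℕ :=
  {p ∈ ⌊z⌋₊.primesLE | w < p ∧ ¬p ∣ Q}

/-- The integers `1 ≤ n ≤ N` such that no sifting prime for `M` divides `n` or `k * n - 1`.
The truncated subtraction is harmless since `n ≥ 1` (for `k ≥ 1`). -/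
noncomputable def twinSifted (M k : ℕ) (w z N : ℝ) : Finset ℕ :=
  {n ∈ Icc 1 ⌊N⌋₊ | ∀ p ∈ siftingPrimes M w z, ¬p ∣ n ∧ ¬p ∣ k * n - 1}

variable {Q M k : ℕ} {w z N : ℝ}

lemma prime_of_mem_siftingPrimes {p : ℕ} (hp : p ∈ siftingPrimes Q w z) : p.Prime :=
  Nat.prime_of_mem_primesLE (mem_filter.1 hp).1

lemma not_dvd_of_mem_siftingPrimes {p : ℕ} (hp : p ∈ siftingPrimes Q w z) : ¬p ∣ Q :=
  (mem_filter.1 hp).2.2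

lemma card_siftingPrimes_le (hz : 0 ≤ z) : (#(siftingPrimes Q w z) : ℝ) ≤ z := by
  refine le_trans ?_ (Nat.floor_le hz)
  have : siftingPrimes Q w z ⊆ Icc 1 ⌊z⌋₊ := fun p hp => mem_Icc.2
    ⟨(prime_of_mem_siftingPrimes hp).one_le, Nat.le_of_mem_primesLE (mem_filter.1 hp).1⟩
  exact_mod_cast (card_le_card this).trans_eq (by simp)

lemma siftingPrimes_mul_subset : siftingPrimes (M * k) w z ⊆ siftingPrimes M w z :=
  monotone_filter_right _ fun _ _ h => ⟨h.1, fun hM => h.2 (hM.mul_right k)⟩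

lemma card_primeFactors_mul_log_two_le (hQ : Q ≠ 0) : #Q.primeFactors * log 2 ≤ log Q := by
  rw [← log_pow]
  refine log_le_log (by positivity) ?_
  have two_le : ∀ p ∈ Q.primeFactors, 2 ≤ p := fun p hp =>
    (Nat.prime_of_mem_primeFactors hp).two_le
  exact_mod_cast (pow_card_le_prod _ _ _ two_le).trans
    (Nat.le_of_dvd hQ.bot_lt (Nat.prod_primeFactors_dvd Q))

lemma sum_siftingPrimes_inv_le (hz : 2 ≤ z) :
    ∑ p ∈ siftingPrimes Q w z, (p : ℝ)⁻¹ ≤ log (log z) + 4 := by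
  have hn : 2 ≤ ⌊z⌋₊ := Nat.le_floor (by exact_mod_cast hz)
  have hn1 : (1 : ℝ) < ⌊z⌋₊ := by exact_mod_cast hn
  calc ∑ p ∈ siftingPrimes Q w z, (p : ℝ)⁻¹ ≤ ∑ p ∈ ⌊z⌋₊.primesLE, (p : ℝ)⁻¹ :=
        sum_le_sum_of_subset_of_nonneg (filter_subset _ _) fun p _ _ => by positivity
    _ ≤ log (log ⌊z⌋₊) + 4 := sum_primesLE_inv_le hn
    _ ≤ log (log z) + 4 := by
        gcongr
        · exact log_pos hn1
        · exact Nat.floor_le (by linarith)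

lemma loglog_sub_log_two_le_loglog_floor (hz : 4 ≤ z) :
    log (log z) - log 2 ≤ log (log ⌊z⌋₊) := by
  have hlog : 0 < log z := log_pos (by linarith)
  have hn : (2 : ℝ) ≤ ⌊z⌋₊ := by
    exact_mod_cast Nat.le_floor (show ((2 : ℕ) : ℝ) ≤ z by push_cast; linarith)
  have le_sq : z ≤ (⌊z⌋₊ : ℝ) ^ 2 := by nlinarith [Nat.lt_floor_add_one z]
  rw [← log_div hlog.ne' two_ne_zero]
  refine log_le_log (by positivity) ?_
  have := log_le_log (by linarith) le_sq
  rw [log_pow] at this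
  push_cast at this
  linarith

lemma sum_primesLE_inv_le_sum_siftingPrimes_add (hw : 0 < w) (hQ : Q ≠ 0) :
    ∑ p ∈ ⌊z⌋₊.primesLE, (p : ℝ)⁻¹ ≤
      ∑ p ∈ siftingPrimes Q w z, (p : ℝ)⁻¹ + ∑ p ∈ ⌊w⌋₊.primesLE, (p : ℝ)⁻¹
        + #Q.primeFactors * w⁻¹ := by
  have cover : ⌊z⌋₊.primesLE ⊆
      siftingPrimes Q w z ∪ ⌊w⌋₊.primesLE ∪ {p ∈ Q.primeFactors | w < p} := by
    intro p hp
    by_cases hwp : w < p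
    · by_cases hpQ : p ∣ Q
      · exact mem_union_right _ (mem_filter.2
          ⟨Nat.mem_primeFactors.2 ⟨Nat.prime_of_mem_primesLE hp, hpQ, hQ⟩, hwp⟩)
      · exact mem_union_left _ (mem_union_left _ (mem_filter.2 ⟨hp, hwp, hpQ⟩))
    · exact mem_union_left _ (mem_union_right _ (Nat.mem_primesLE.2
        ⟨Nat.le_floor (not_lt.1 hwp), Nat.prime_of_mem_primesLE hp⟩))
  have divisors_le :
      ∑ p ∈ Q.primeFactors with w < (p : ℕ), ((p : ℕ) : ℝ)⁻¹ ≤ #Q.primeFactors * w⁻¹ := by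
    refine (sum_le_card_nsmul _ _ w⁻¹ fun p hp => inv_anti₀ hw (mem_filter.1 hp).2.le).trans ?_
    rw [nsmul_eq_mul]
    gcongr
    exact filter_subset _ _
  have union_le : ∀ s t : Finset ℕ,
      ∑ p ∈ s ∪ t, (p : ℝ)⁻¹ ≤ ∑ p ∈ s, (p : ℝ)⁻¹ + ∑ p ∈ t, (p : ℝ)⁻¹ := fun s t => by
    rw [← sum_union_inter]
    exact le_add_of_nonneg_right (sum_nonneg fun p _ => by positivity)
  refine (sum_le_sum_of_subset_of_nonneg cover fun p _ _ => by positivity).trans ?_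
  exact (union_le _ _).trans (add_le_add (union_le _ _) divisors_le)

lemma exists_le_sum_siftingPrimes_inv (B : ℝ) : ∃ C : ℝ, ∀ (w z : ℝ) (Q : ℕ), 2 ≤ w → 4 ≤ z →
    Q ≠ 0 → log Q ≤ B * w →
    log (log z) - log (log w) - C ≤ ∑ p ∈ siftingPrimes Q w z, (p : ℝ)⁻¹ := by
  obtain ⟨C, mertens_lower⟩ := exists_loglog_sub_le_sum_primesLE_inv
  refine ⟨C + log 2 + 4 + B / log 2, fun w z Q hw hz hQ hQB => ?_⟩
  have hw2 : 2 ≤ ⌊w⌋₊ := Nat.le_floor (by exact_mod_cast hw)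
  have hz2 : 2 ≤ ⌊z⌋₊ := Nat.le_floor (by push_cast; linarith)
  have loglog_floor_le : log (log ⌊w⌋₊) ≤ log (log w) := by
    have : (1 : ℝ) < ⌊w⌋₊ := by exact_mod_cast hw2
    gcongr
    · exact log_pos this
    · exact Nat.floor_le (by linarith)
  have divisors_le : #Q.primeFactors * w⁻¹ ≤ B / log 2 := by
    have := card_primeFactors_mul_log_two_le hQ
    rw [← div_eq_mul_inv, div_le_div_iff₀ (by linarith) (log_pos one_lt_two)]
    linarith
  have := sum_primesLE_inv_le_sum_siftingPrimes_add (w := w) (z := z) (by linarith) hQ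
  linarith [mertens_lower _ hz2, sum_primesLE_inv_le hw2, loglog_sub_log_two_le_loglog_floor hz]

lemma exists_prod_siftingPrimes_one_sub_le (B : ℝ) : ∃ C > 0, ∀ (w z : ℝ) (Q : ℕ), 2 ≤ w →
    4 ≤ z → Q ≠ 0 → log Q ≤ B * w →
    ∏ p ∈ siftingPrimes Q w z, (1 - 2 / (p : ℝ)) ≤ C * (log w / log z) ^ 2 := by
  obtain ⟨C, sum_ge⟩ := exists_le_sum_siftingPrimes_inv B
  refine ⟨exp (2 * C), exp_pos _, fun w z Q hw hz hQ hQB => ?_⟩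
  have hlogw : 0 < log w := log_pos (by linarith)
  have hlogz : 0 < log z := log_pos (by linarith)
  calc ∏ p ∈ siftingPrimes Q w z, (1 - 2 / (p : ℝ))
      ≤ ∏ p ∈ siftingPrimes Q w z, exp (-(2 / (p : ℝ))) := by
        refine prod_le_prod (fun p hp => ?_) fun p _ => one_sub_le_exp_neg _
        have : (2 : ℝ) ≤ p := by exact_mod_cast (prime_of_mem_siftingPrimes hp).two_le
        exact sub_nonneg.2 ((div_le_one (by linarith)).2 this)
    _ = exp (-(2 * ∑ p ∈ siftingPrimes Q w z, (p : ℝ)⁻¹)) := by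
        simp only [← exp_sum, sum_neg_distrib, mul_sum, div_eq_mul_inv]
    _ ≤ exp (2 * C + (log (log w / log z) + log (log w / log z))) := by
        rw [log_div hlogw.ne' hlogz.ne', exp_le_exp]
        linarith [sum_ge w z Q hw hz hQ hQB]
    _ = _ := by rw [exp_add, exp_add, exp_log (by positivity), sq]

lemma prod_siftingPrimes_one_add_exp_one_mul_le (hz : 2 ≤ z) :
    ∏ p ∈ siftingPrimes Q w z, (1 + exp 1 * (2 / (p : ℝ))) ≤ exp 24 * exp (6 * log (log z)) := by
  calc ∏ p ∈ siftingPrimes Q w z, (1 + exp 1 * (2 / (p : ℝ)))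
      ≤ ∏ p ∈ siftingPrimes Q w z, exp (6 * (p : ℝ)⁻¹) := by
        refine prod_le_prod (fun p _ => by positivity) fun p _ => ?_
        have : exp 1 * (2 * (p : ℝ)⁻¹) ≤ 3 * (2 * (p : ℝ)⁻¹) := by
          gcongr
          exact exp_one_lt_three.le
        rw [div_eq_mul_inv]
        linarith [add_one_le_exp (6 * (p : ℝ)⁻¹)]
    _ ≤ exp (24 + 6 * log (log z)) := by
        rw [← exp_sum, ← mul_sum, exp_le_exp]
        linarith [sum_siftingPrimes_inv_le (Q := Q) (w := w) hz]
    _ = _ := exp_add _ _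

lemma one_lt_log (hz : 4 ≤ z) : 1 < log z := by
  rw [lt_log_iff_exp_lt (by linarith)]
  linarith [exp_one_lt_three]

lemma prod_siftingPrimes_one_add_div_pow_le (hw : 2 ≤ w) (hz : 4 ≤ z) {b : ℕ}
    (hb : 4 * log (log z) ≤ b) :
    (∏ p ∈ siftingPrimes Q w z, (1 + exp 1 * (2 / (p : ℝ)))) / exp 1 ^ (2 * b)
      ≤ exp 24 / log 2 ^ 2 * (log w / log z) ^ 2 := by
  have hlogz := one_lt_log hz
  calc _ ≤ exp 24 * exp (6 * log (log z)) / exp (8 * log (log z)) := by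
        gcongr
        · exact prod_siftingPrimes_one_add_exp_one_mul_le (by linarith)
        · rw [← exp_nat_mul, exp_le_exp]
          push_cast
          linarith
    _ = exp 24 / log 2 ^ 2 * (log 2 / log z) ^ 2 := by
        rw [mul_div_assoc, ← exp_sub,
          show 6 * log (log z) - 8 * log (log z) = -(log (log z) + log (log z)) by ring, exp_neg,
          exp_add, exp_log (by linarith)]
        field_simp
    _ ≤ _ := by gcongr

lemma prod_siftingPrimes_one_add_div_le (hz : 0 < z) :
    ∏ _p ∈ siftingPrimes Q w z, (1 + 2 / z) ≤ exp 2 := by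
  calc ∏ _p ∈ siftingPrimes Q w z, (1 + 2 / z) ≤ ∏ _p ∈ siftingPrimes Q w z, exp (2 / z) := by
        refine prod_le_prod (fun p _ => by positivity) fun p _ => ?_
        linarith [add_one_le_exp (2 / z)]
    _ = exp (#(siftingPrimes Q w z) * (2 / z)) := by rw [prod_const, exp_nat_mul]
    _ ≤ exp (z * (2 / z)) := by
        gcongr
        exact card_siftingPrimes_le hz.le
    _ = exp 2 := by rw [mul_div_cancel₀ _ hz.ne']

lemma twinSifted_subset_sifted (hk : 1 ≤ k) :
    twinSifted M k w z N ⊆ {n ∈ range (⌊N⌋₊ + 1) |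
      ∀ p ∈ siftingPrimes (M * k) w z, (n : ZMod p) ∉ ({0, (k : ZMod p)⁻¹} : Finset (ZMod p))} := by
  intro n hn
  obtain ⟨hnN, hsift⟩ := mem_filter.1 hn
  rw [mem_Icc] at hnN
  refine mem_filter.2 ⟨mem_range.2 (by omega), fun p hp => ?_⟩
  have : Fact p.Prime := ⟨prime_of_mem_siftingPrimes hp⟩
  obtain ⟨hpn, hpkn⟩ := hsift p (siftingPrimes_mul_subset hp)
  have hkp : (k : ZMod p) ≠ 0 := fun h =>
    not_dvd_of_mem_siftingPrimes hp (((ZMod.natCast_eq_zero_iff k p).1 h).mul_left M)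
  rw [mem_insert, mem_singleton, not_or]
  refine ⟨fun h => hpn ((ZMod.natCast_eq_zero_iff n p).1 h), fun h => hpkn ?_⟩
  rw [← ZMod.natCast_eq_zero_iff, Nat.cast_sub (Nat.mul_pos hk hnN.1)]
  simp [h, hkp]

lemma card_twinSifted_le (hz : 1 ≤ z) (hk : 1 ≤ k) (b : ℕ) :
    (#(twinSifted M k w z N) : ℝ) ≤ (⌊N⌋₊ + 1) *
        (∏ p ∈ siftingPrimes (M * k) w z, (1 - 2 / (p : ℝ))
          + (∏ p ∈ siftingPrimes (M * k) w z, (1 + exp 1 * (2 / (p : ℝ)))) / exp 1 ^ (2 * b))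
      + z ^ (2 * b) * ∏ _p ∈ siftingPrimes (M * k) w z, (1 + 2 / z) := by
  set P := siftingPrimes (M * k) w z
  have two_classes : ∀ p ∈ P, (#({0, (k : ZMod p)⁻¹} : Finset (ZMod p)) : ℝ) = 2 := by
    intro p hp
    have : Fact p.Prime := ⟨prime_of_mem_siftingPrimes hp⟩
    have hkp : (k : ZMod p) ≠ 0 := fun h =>
      not_dvd_of_mem_siftingPrimes hp (((ZMod.natCast_eq_zero_iff k p).1 h).mul_left M)
    exact_mod_cast card_pair (inv_ne_zero hkp).symm
  have hcop : (P : Set ℕ).Pairwise Nat.Coprime := fun p hp q hq =>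
    (Nat.coprime_primes (prime_of_mem_siftingPrimes hp) (prime_of_mem_siftingPrimes hq)).2
  have brun := card_sifted_le (fun p hp => (prime_of_mem_siftingPrimes hp).ne_zero) hcop
    (fun p => {0, (k : ZMod p)⁻¹}) (one_le_exp zero_le_one) hz (⌊N⌋₊ + 1) b
  rw [prod_congr rfl fun p hp => by rw [two_classes p hp],
    prod_congr (f := fun p : ℕ => 1 + exp 1 * _) rfl fun p hp => by rw [two_classes p hp],
    prod_congr (f := fun p : ℕ => 1 + _ / z) rfl fun p hp => by rw [two_classes p hp]] at brun
  push_cast at brun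
  exact (Nat.cast_le.2 (card_le_card (twinSifted_subset_sifted hk))).trans brun

lemma exists_card_twinSifted_le (B : ℝ) : ∃ C > 0, ∀ (w z N : ℝ) (M k : ℕ), 2 ≤ w → 4 ≤ z →
    1 ≤ N → 1 ≤ M → 1 ≤ k → log (M * k : ℕ) ≤ B * w →
    (#(twinSifted M k w z N) : ℝ) ≤
      C * (N * (log w / log z) ^ 2 + z ^ (8 * log (log z) + 2)) := by
  obtain ⟨C₁, hC₁, main_le⟩ := exists_prod_siftingPrimes_one_sub_le B
  refine ⟨2 * (C₁ + exp 24 / log 2 ^ 2) + exp 2, by positivity,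
    fun w z N M k hw hz hN hM hk hB => ?_⟩
  have hloglog : 0 < log (log z) := log_pos (one_lt_log hz)
  set b := ⌈4 * log (log z)⌉₊
  have le_b : 4 * log (log z) ≤ b := Nat.le_ceil _
  have b_lt : (b : ℝ) < 4 * log (log z) + 1 := Nat.ceil_lt_add_one (by positivity)
  have hMk : M * k ≠ 0 := by positivity
  have floor_le : (⌊N⌋₊ : ℝ) + 1 ≤ 2 * N := by linarith [Nat.floor_le (show 0 ≤ N by linarith)]
  have remainder : z ^ (2 * b) ≤ z ^ (8 * log (log z) + 2) := by
    rw [← rpow_natCast]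
    refine rpow_le_rpow_of_exponent_le (by linarith) ?_
    push_cast
    linarith
  calc (#(twinSifted M k w z N) : ℝ)
      ≤ 2 * N * (C₁ * (log w / log z) ^ 2 + exp 24 / log 2 ^ 2 * (log w / log z) ^ 2)
        + z ^ (8 * log (log z) + 2) * exp 2 := by
        refine (card_twinSifted_le (by linarith) hk b).trans ?_
        have bracket_le := add_le_add (main_le w z _ hw hz hMk hB)
          (prod_siftingPrimes_one_add_div_pow_le (Q := M * k) hw hz le_b)
        refine add_le_add ((mul_le_mul_of_nonneg_left bracket_le (by positivity)).trans
          (mul_le_mul_of_nonneg_right floor_le (by positivity))) ?_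
        gcongr
        exact prod_siftingPrimes_one_add_div_le (by linarith)
    _ = 2 * (C₁ + exp 24 / log 2 ^ 2) * (N * (log w / log z) ^ 2)
        + exp 2 * z ^ (8 * log (log z) + 2) := by ring
    _ ≤ _ := by
        rw [mul_add _ (N * _)]
        gcongr
        · exact le_add_of_nonneg_right (exp_pos 2).le
        · exact le_add_of_nonneg_left (by positivity)

end TwinSieve

section Decomposition

open Finset Real

/-- The set `R₀^{(M)}`, for arbitrary real parameters `y` and `U`. -/
noncomputable def siftedSmooth (M : ℕ) (y U : ℝ) : Finset ℕ :=
  {m ∈ Icc 1 ⌊U⌋₊ | (∀ p ∈ m.primeFactors, (p : ℝ) ≤ y) ∧ Nat.gcd (m - 1) (PM M y) = 1}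

variable {M k : ℕ} {w z t y U V : ℝ}

lemma one_le_of_mem_siftedSmooth {m : ℕ} (hm : m ∈ siftedSmooth M y U) : 1 ≤ m :=
  (mem_Icc.1 (mem_filter.1 hm).1).1

lemma le_of_mem_siftedSmooth {m : ℕ} (hm : m ∈ siftedSmooth M y U) : (m : ℝ) ≤ U := by
  refine (Nat.le_floor_iff' ?_).1 (mem_Icc.1 (mem_filter.1 hm).1).2
  exact Nat.one_le_iff_ne_zero.1 (one_le_of_mem_siftedSmooth hm)

lemma not_dvd_sub_one_of_mem_siftedSmooth {m p : ℕ} (hm : m ∈ siftedSmooth M y U)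
    (hp : p.Prime) (hpM : ¬p ∣ M) (hpy : (p : ℝ) ≤ y) : ¬p ∣ m - 1 := fun hpm => by
  have hpP : p ∣ PM M y := dvd_prod_of_mem _ <| mem_filter.2
    ⟨mem_range.2 (Nat.lt_succ_of_le (Nat.le_floor hpy)), hp, hpM⟩
  have := Nat.dvd_gcd hpm hpP
  rw [(mem_filter.1 hm).2.2] at this
  exact hp.one_lt.ne' (Nat.dvd_one.1 this)

lemma mem_smoothNumbers_floor_succ {m : ℕ} (hm : m ≠ 0) :
    m ∈ (⌊y⌋₊ + 1).smoothNumbers ↔ ∀ p ∈ m.primeFactors, (p : ℝ) ≤ y := by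
  simp only [Nat.mem_smoothNumbers', Nat.lt_succ_iff, Nat.mem_primeFactors]
  exact ⟨fun h p hp => (Nat.le_floor_iff' hp.1.ne_zero).1 (h p hp.1 hp.2.1),
    fun h p hp hpm => Nat.le_floor (h p ⟨hp, hpm, hm⟩)⟩

lemma mem_twinSifted_of_mul_mem_siftedSmooth {q : ℕ} (hq : q.Prime) (hk : 1 ≤ k) (hzq : z < q)
    (hqy : (q : ℝ) ≤ y) (hz : 0 ≤ z) (hUV : U ≤ V) (hm : k * q ∈ siftedSmooth M y U) :
    q ∈ twinSifted M k w z (min y (V / k)) := by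
  have hkqV := (le_of_mem_siftedSmooth hm).trans hUV
  push_cast at hkqV
  have hqV : (q : ℝ) ≤ V / k := (le_div_iff₀' (by exact_mod_cast hk)).2 hkqV
  refine mem_filter.2 ⟨mem_Icc.2 ⟨hq.one_le, Nat.le_floor (le_min hqy hqV)⟩, fun p hp => ?_⟩
  have hpz : (p : ℝ) ≤ z :=
    (Nat.cast_le.2 (Nat.le_of_mem_primesLE (mem_filter.1 hp).1)).trans (Nat.floor_le hz)
  have hp' := prime_of_mem_siftingPrimes hp
  refine ⟨fun hpq => ?_, not_dvd_sub_one_of_mem_siftedSmooth hm hp'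
    (not_dvd_of_mem_siftingPrimes hp) (by linarith)⟩
  rw [(Nat.prime_dvd_prime_iff_eq hp' hq).1 hpq] at hpz
  linarith

lemma siftedSmooth_subset (hz : 0 < z) (hzt : z ≤ t) (hUV : U ≤ V) :
    siftedSmooth M y U ⊆ Nat.smoothNumbersUpTo ⌊V⌋₊ (⌊t⌋₊ + 1) ∪
      (Nat.smoothNumbersUpTo ⌊V / t⌋₊ (⌊y⌋₊ + 1)).biUnion fun k =>
        (twinSifted M k w z (min y (V / k))).image (k * ·) := by
  intro m hm
  have hm0 : m ≠ 0 := Nat.one_le_iff_ne_zero.1 (one_le_of_mem_siftedSmooth hm)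
  have hmV : (m : ℝ) ≤ V := (le_of_mem_siftedSmooth hm).trans hUV
  by_cases hsmooth : ∀ p ∈ m.primeFactors, (p : ℝ) ≤ t
  · exact mem_union_left _ (Nat.mem_smoothNumbersUpTo.2
      ⟨Nat.le_floor hmV, (mem_smoothNumbers_floor_succ hm0).2 hsmooth⟩)
  push Not at hsmooth
  obtain ⟨q, hqm, htq⟩ := hsmooth
  have hqy := (mem_filter.1 hm).2.1 q hqm
  obtain ⟨k, rfl⟩ := exists_eq_mul_left_of_dvd (Nat.dvd_of_mem_primeFactors hqm)
  have hk0 : k ≠ 0 := left_ne_zero_of_mul hm0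
  have hkV : (k : ℝ) ≤ V / t := by
    rw [le_div_iff₀ (hz.trans_le hzt)]
    push_cast at hmV
    exact le_trans (by gcongr) hmV
  have hky : ∀ p ∈ k.primeFactors, (p : ℝ) ≤ y := fun p hp =>
    (mem_filter.1 hm).2.1 p (Nat.primeFactors_mono (Nat.dvd_mul_right k q) hm0 hp)
  refine mem_union_right _ (mem_biUnion.2 ⟨k, Nat.mem_smoothNumbersUpTo.2
    ⟨Nat.le_floor hkV, (mem_smoothNumbers_floor_succ hk0).2 hky⟩, mem_image.2 ⟨q, ?_, rfl⟩⟩)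
  exact mem_twinSifted_of_mul_mem_siftedSmooth (Nat.prime_of_mem_primeFactors hqm)
    (Nat.one_le_iff_ne_zero.2 hk0) (by linarith) hqy hz.le hUV hm

lemma card_siftedSmooth_le_sum (w : ℝ) (hz : 0 < z) (hzt : z ≤ t) (hUV : U ≤ V) :
    (#(siftedSmooth M y U) : ℝ) ≤ #(Nat.smoothNumbersUpTo ⌊V⌋₊ (⌊t⌋₊ + 1)) +
      ∑ k ∈ Nat.smoothNumbersUpTo ⌊V / t⌋₊ (⌊y⌋₊ + 1),
        (#(twinSifted M k w z (min y (V / k))) : ℝ) := by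
  have := (card_le_card (siftedSmooth_subset (w := w) (M := M) (y := y) hz hzt hUV)).trans <|
    (card_union_le _ _).trans <| Nat.add_le_add_left
      (card_biUnion_le.trans <| sum_le_sum fun k _ => card_image_le) _
  exact_mod_cast this

lemma min_le_rpow_mul_rpow {a b α : ℝ} (ha : 0 ≤ a) (hb : 0 ≤ b) (hα : 0 ≤ α) (hα1 : α ≤ 1) :
    min a b ≤ a ^ α * b ^ (1 - α) := by
  have hmin : 0 ≤ min a b := le_min ha hb
  calc min a b = min a b ^ α * min a b ^ (1 - α) := by
        rw [← rpow_add_of_nonneg hmin hα (by linarith), add_sub_cancel, rpow_one]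
    _ ≤ a ^ α * b ^ (1 - α) := by
        gcongr
        · exact min_le_left a b
        · exact min_le_right a b

lemma card_smoothNumbersUpTo_le (N k : ℕ) : #(Nat.smoothNumbersUpTo N k) ≤ N := by
  have : Nat.smoothNumbersUpTo N k ⊆ Icc 1 N := fun m hm => by
    obtain ⟨hmN, hm⟩ := Nat.mem_smoothNumbersUpTo.1 hm
    exact mem_Icc.2 ⟨Nat.one_le_iff_ne_zero.2 (Nat.ne_zero_of_mem_smoothNumbers hm), hmN⟩
  simpa using card_le_card this

lemma exists_card_twinSifted_min_le (B : ℝ) : ∃ C > 0, ∀ (w z y V α : ℝ) (M k : ℕ), 2 ≤ w →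
    4 ≤ z → 1 ≤ y → 0 ≤ α → α ≤ 1 → 1 ≤ M → 1 ≤ k → k ≤ V → log M + log V ≤ B * w →
    (#(twinSifted M k w z (min y (V / k))) : ℝ) ≤
      C * ((log w / log z) ^ 2 * (y ^ α * V ^ (1 - α)) * (k : ℝ) ^ (-(1 - α))
        + z ^ (8 * log (log z) + 2)) := by
  obtain ⟨C, hC, sieve⟩ := exists_card_twinSifted_le B
  refine ⟨C, hC, fun w z y V α M k hw hz hy hα hα1 hM hk hkV hB => ?_⟩
  have hk0 : (0 : ℝ) < k := by exact_mod_cast hk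
  have hV : 0 < V := hk0.trans_le hkV
  have log_Mk_le : log (M * k : ℕ) ≤ B * w := by
    push_cast
    rw [log_mul (by positivity) hk0.ne']
    linarith [log_le_log hk0 hkV]
  have min_le : min y (V / k) ≤ y ^ α * V ^ (1 - α) * (k : ℝ) ^ (-(1 - α)) := by
    rw [mul_assoc, rpow_neg hk0.le, ← div_eq_mul_inv, ← div_rpow hV.le hk0.le]
    exact min_le_rpow_mul_rpow (by linarith) (by positivity) hα hα1
  refine (sieve w z _ M k hw hz (le_min hy ((one_le_div hk0).2 hkV)) hM hk log_Mk_le).trans ?_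
  rw [mul_comm (min _ _), mul_assoc (_ ^ 2)]
  gcongr

lemma exists_sum_card_twinSifted_le (B : ℝ) : ∃ C > 0, ∀ (w z t y V α : ℝ) (M : ℕ), 2 ≤ w →
    4 ≤ z → 1 ≤ t → 2 ≤ y → 0 < V → 0 ≤ α → α ≤ 1 / 4 → 1 ≤ M → log M + log V ≤ B * w →
    ∑ k ∈ Nat.smoothNumbersUpTo ⌊V / t⌋₊ (⌊y⌋₊ + 1), (#(twinSifted M k w z (min y (V / k))) : ℝ)
      ≤ C * ((log w / log z) ^ 2 * (y ^ α * V ^ (1 - α) *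
          (log y * exp (3 * (α * y ^ α * log y)))) + z ^ (8 * log (log z) + 2) * (V / t)) := by
  obtain ⟨C₁, hC₁, rankin⟩ := exists_sum_smooth_rpow_le
  obtain ⟨C₂, hC₂, sieve⟩ := exists_card_twinSifted_min_le B
  refine ⟨C₂ * C₁ + C₂, by positivity, fun w z t y V α M hw hz ht hy hV hα hα' hM hB => ?_⟩
  set K := Nat.smoothNumbersUpTo ⌊V / t⌋₊ (⌊y⌋₊ + 1)
  set E := (log w / log z) ^ 2
  set Z := z ^ (8 * log (log z) + 2)
  have term_le : ∀ k ∈ K, (#(twinSifted M k w z (min y (V / k))) : ℝ) ≤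
      C₂ * (E * (y ^ α * V ^ (1 - α)) * (k : ℝ) ^ (-(1 - α)) + Z) := fun k hk => by
    obtain ⟨hkV, hk⟩ := Nat.mem_smoothNumbersUpTo.1 hk
    exact sieve w z y V α M k hw hz (by linarith) hα (by linarith) hM
      (Nat.one_le_iff_ne_zero.2 (Nat.ne_zero_of_mem_smoothNumbers hk))
      (((Nat.le_floor_iff (by positivity)).1 hkV).trans (div_le_self hV.le ht)) hB
  have card_le : (#K : ℝ) ≤ V / t :=
    (Nat.cast_le.2 (card_smoothNumbersUpTo_le _ _)).trans (Nat.floor_le (by positivity))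
  have sum_le := rankin α y hα hα' hy K fun k hk => (Nat.mem_smoothNumbersUpTo.1 hk).2
  have hlogy : 0 < log y := log_pos (by linarith)
  calc _ ≤ C₂ * (E * (y ^ α * V ^ (1 - α)) * ∑ k ∈ K, (k : ℝ) ^ (-(1 - α)) + #K * Z) := by
        refine (sum_le_sum term_le).trans_eq ?_
        rw [← mul_sum, sum_add_distrib, ← mul_sum, sum_const, nsmul_eq_mul]
    _ ≤ C₂ * (E * (y ^ α * V ^ (1 - α)) * (C₁ * log y * exp (3 * (α * y ^ α * log y)))
        + V / t * Z) := by gcongr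
    _ = C₂ * C₁ * (E * (y ^ α * V ^ (1 - α) * (log y * exp (3 * (α * y ^ α * log y)))))
        + C₂ * (Z * (V / t)) := by ring
    _ ≤ _ := by
        rw [mul_add _ (E * _)]
        gcongr
        · exact le_add_of_nonneg_right hC₂.le
        · exact le_add_of_nonneg_left (by positivity)

lemma exists_card_siftedSmooth_le (B : ℝ) : ∃ C > 0, ∀ (w z t y U V α : ℝ) (M : ℕ), 2 ≤ w →
    4 ≤ z → z ≤ t → exp 4 ≤ t → 2 ≤ y → U ≤ V → 0 < V → 0 ≤ α → α ≤ 1 / 4 → 1 ≤ M →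
    log M + log V ≤ B * w →
    (#(siftedSmooth M y U) : ℝ) ≤ C * (V * log t * exp (-(log V / log t))
      + (log w / log z) ^ 2 * (y ^ α * V ^ (1 - α) * (log y * exp (3 * (α * y ^ α * log y))))
      + z ^ (8 * log (log z) + 2) * (V / t)) := by
  obtain ⟨C₁, hC₁, smooth_le⟩ := exists_card_smoothNumbersUpTo_le
  obtain ⟨C₂, hC₂, sum_le⟩ := exists_sum_card_twinSifted_le B
  refine ⟨C₁ + C₂, by positivity, fun w z t y U V α M hw hz hzt ht hy hUV hV hα hα' hM hB => ?_⟩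
  have ht0 : 0 < t := by linarith
  have hlogt : 0 < log t := log_pos (by linarith)
  have hlogy : 0 < log y := log_pos (by linarith)
  refine (card_siftedSmooth_le_sum w (by linarith) hzt hUV).trans ((add_le_add
    (smooth_le V t hV ht) (sum_le w z t y V α M hw hz (by linarith) hy hV hα hα' hM hB)).trans ?_)
  rw [add_assoc, mul_add (C₁ + C₂)]
  gcongr
  · exact le_add_of_nonneg_right hC₂.le
  · exact le_add_of_nonneg_left hC₁.le

end Decomposition

section Asymptotics

open Asymptotics Filter Finset Real

lemma eventually_const_mul_rpow_le_exp_rpow (C a : ℝ) {b : ℝ} (hb : 0 < b) :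
    ∀ᶠ L : ℝ in atTop, C * L ^ a ≤ exp (L ^ b) := by
  have littleO := ((isLittleO_rpow_exp_atTop (a / b)).const_mul_left C).comp_tendsto
    (tendsto_rpow_atTop hb)
  filter_upwards [littleO.eventuallyLE, eventually_gt_atTop 0] with L hL hL0
  simp only [Function.comp_apply, ← rpow_mul hL0.le, mul_div_cancel₀ a hb.ne', norm_eq_abs,
    abs_exp] at hL
  exact (le_abs_self _).trans hL

lemma eventually_mul_log_add_le_rpow (C D : ℝ) {b : ℝ} (hb : 0 < b) :
    ∀ᶠ L : ℝ in atTop, C * log L + D ≤ L ^ b := by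
  have littleO := ((isLittleO_log_rpow_atTop hb).const_mul_left C).add
    ((isLittleO_const_left (c := D)).2 (.inr (tendsto_norm_atTop_atTop.comp
      (tendsto_rpow_atTop hb))))
  filter_upwards [littleO.eventuallyLE, eventually_gt_atTop 0] with L hL hL0
  rw [norm_eq_abs, norm_of_nonneg (rpow_nonneg hL0.le b)] at hL
  exact (le_abs_self _).trans hL

lemma eventually_mul_rpow_mul_log_le (C : ℝ) {ρ c : ℝ} (hρ : 0 < ρ) (hc : 0 < c) :
    ∀ᶠ s : ℝ in atTop, C * (s ^ (1 - ρ) * log s) ≤ c * s := by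
  have littleO := ((isBigO_refl (fun s : ℝ => s ^ (1 - ρ)) atTop).mul_isLittleO
    (isLittleO_log_rpow_atTop hρ)).const_mul_left C
  filter_upwards [littleO.bound hc, eventually_gt_atTop 0] with s hs hs0
  rw [← rpow_add hs0, sub_add_cancel, rpow_one, norm_eq_abs, norm_of_nonneg hs0.le] at hs
  exact (le_abs_self _).trans hs

lemma eventually_const_mul_pow_mul_exp_le (C : ℝ) (n : ℕ) {ρ c : ℝ} (hρ : 0 < ρ) (hc : 0 < c) :
    ∀ᶠ s : ℝ in atTop, C * (s ^ n * exp (3 * (s ^ (1 - ρ) * log s))) ≤ exp (c * s) := by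
  have littleO := (isLittleO_pow_exp_pos_mul_atTop n (half_pos hc)).const_mul_left C
  filter_upwards [littleO.eventuallyLE, eventually_mul_rpow_mul_log_le 3 hρ (half_pos hc)]
    with s pow_le log_le
  rw [norm_eq_abs, norm_eq_abs, abs_exp] at pow_le
  calc C * (s ^ n * exp (3 * (s ^ (1 - ρ) * log s)))
      = C * s ^ n * exp (3 * (s ^ (1 - ρ) * log s)) := by ring
    _ ≤ exp (c / 2 * s) * exp (c / 2 * s) := by
        gcongr
        exact (le_abs_self _).trans pow_le
    _ = exp (c * s) := by rw [← exp_add]; ring_nf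

lemma tendsto_log_log_atTop : Tendsto (fun x => log (log x)) atTop atTop :=
  tendsto_log_atTop.comp tendsto_log_atTop

lemma yy_pos (ε x : ℝ) : 0 < yy ε x :=
  exp_pos _

lemma log_yy (ε x : ℝ) :
    log (yy ε x) = (1 - ε) * log x * log (log (log x)) / log (log x) := by
  rw [yy, log_exp]
  rfl

lemma log_yy_nonneg {ε x : ℝ} (hε1 : ε ≤ 1) (hx : 0 ≤ log x) (hs : 1 ≤ log (log x)) :
    0 ≤ log (yy ε x) := by
  rw [log_yy]
  have := log_nonneg hs
  have := sub_nonneg.2 hε1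
  positivity

lemma log_yy_le {ε x : ℝ} (hε : 0 ≤ ε) (hε1 : ε ≤ 1) (hx : 0 ≤ log x) (hs : 0 < log (log x)) :
    log (yy ε x) ≤ log x := by
  rw [log_yy, div_le_iff₀ hs]
  have hlog : log (log (log x)) ≤ log (log x) := log_le_self hs.le
  have := mul_le_mul_of_nonneg_left hlog (mul_nonneg (sub_nonneg.2 hε1) hx)
  nlinarith [mul_nonneg (mul_nonneg hε hx) hs.le]

lemma eventually_UU_le_mul_log {ε : ℝ} (CU : ℝ) (hε : 0 ≤ ε) (hε1 : ε ≤ 1) :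
    ∀ᶠ x in atTop, ∀ M : ℕ, UU CU M ε x ≤ x * log x := by
  filter_upwards [eventually_ge_atTop 0, tendsto_log_atTop.eventually_ge_atTop 0,
    tendsto_log_log_atTop.eventually_ge_atTop |CU|, tendsto_log_log_atTop.eventually_ge_atTop 1]
    with x hx hL hCU hs M
  have hs0 : 0 < log (log x) := zero_lt_one.trans_le hs
  have totient_div_le : (M.totient : ℝ) / M ≤ 1 :=
    div_le_one_of_le₀ (Nat.cast_le.2 M.totient_le) M.cast_nonneg
  have log_y_nonneg := log_yy_nonneg hε1 hL hs
  have log_y_le := log_yy_le hε hε1 hL hs0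
  change CU * (M.totient / M) * x * log (yy ε x) / log (log x) ≤ _
  rw [div_le_iff₀ hs0]
  calc CU * (M.totient / M) * x * log (yy ε x) ≤ |CU| * 1 * x * log x := by
        gcongr ?_ * ?_ * _ * ?_
        exact le_abs_self CU
    _ ≤ log (log x) * 1 * x * log x := by gcongr
    _ = x * log x * log (log x) := by ring

lemma eventually_two_le_yy {ε : ℝ} (hε1 : ε < 1) : ∀ᶠ x in atTop, 2 ≤ yy ε x := by
  filter_upwards [tendsto_log_atTop.eventually (isLittleO_log_id_atTop.bound (sub_pos.2 hε1)),
    tendsto_log_atTop.eventually_ge_atTop 0, tendsto_log_log_atTop.eventually_ge_atTop (exp 1)]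
    with x hlog hL hs
  have hs0 : 0 < log (log x) := (exp_pos 1).trans_le hs
  rw [norm_eq_abs, abs_of_pos hs0, id, norm_of_nonneg hL] at hlog
  have one_le_logloglog : 1 ≤ log (log (log x)) := (le_log_iff_exp_le hs0).2 hs
  have one_le_log_yy : 1 ≤ log (yy ε x) := by
    rw [log_yy, one_le_div hs0]
    nlinarith
  rw [le_log_iff_exp_le (yy_pos ε x)] at one_le_log_yy
  linarith [add_one_le_exp (1 : ℝ)]

lemma const_mul_mul_rpow_mul_exp_neg_le {C x L a b E : ℝ} (hx : 0 ≤ x) (hL : 0 < L)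
    (h : C * L ^ (a + b) ≤ exp E) : C * (x * L ^ a * exp (-E)) ≤ x / L ^ b := by
  rw [le_div_iff₀ (by positivity), exp_neg]
  calc C * (x * L ^ a * (exp E)⁻¹) * L ^ b = x * (C * L ^ (a + b)) * (exp E)⁻¹ := by
        rw [rpow_add hL]; ring
    _ ≤ x * exp E * (exp E)⁻¹ := by gcongr
    _ = x := mul_inv_cancel_right₀ (exp_ne_zero E) x

lemma eventually_smooth_term_le {C η : ℝ} (hC : 0 ≤ C) (hη : 0 < η) (b : ℝ) :
    ∀ᶠ x in atTop, C * (x * log x * log x ^ (1 - η) *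
      exp (-(log (x * log x) / log x ^ (1 - η)))) ≤ x / log x ^ b := by
  filter_upwards [tendsto_log_atTop.eventually (eventually_const_mul_rpow_le_exp_rpow C (2 + b) hη),
    tendsto_log_atTop.eventually_ge_atTop 1, eventually_gt_atTop 0] with x le_exp hL hx
  set L := log x
  have hL0 : 0 < L := zero_lt_one.trans_le hL
  have rpow_le : L ^ η ≤ log (x * L) / L ^ (1 - η) := by
    rw [le_div_iff₀ (by positivity), ← rpow_add hL0, add_sub_cancel, rpow_one,
      log_mul hx.ne' hL0.ne']
    exact le_add_of_nonneg_right (log_nonneg hL)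
  calc C * (x * L * L ^ (1 - η) * exp (-(log (x * L) / L ^ (1 - η))))
      ≤ C * (x * L * L ^ (1 : ℝ) * exp (-L ^ η)) := by gcongr; linarith
    _ = C * (x * L ^ (2 : ℝ) * exp (-L ^ η)) := by rw [rpow_one, rpow_two]; ring
    _ ≤ x / L ^ b := const_mul_mul_rpow_mul_exp_neg_le hx.le hL0 le_exp

lemma eventually_remainder_term_le {C η : ℝ} (hC : 0 ≤ C) (hη : 0 < η) (hη2 : η < 1 / 2) (b : ℝ) :
    ∀ᶠ x in atTop, C * (exp (log x ^ (1 - 2 * η)) ^ (8 * log (log x ^ (1 - 2 * η)) + 2) *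
      (x * log x / exp (log x ^ (1 - η)))) ≤ x / log x ^ b := by
  filter_upwards [tendsto_log_atTop.eventually
      (eventually_const_mul_rpow_le_exp_rpow C (1 + b) (show 0 < 1 - 2 * η by linarith)),
    tendsto_log_atTop.eventually (eventually_mul_log_add_le_rpow 8 3 hη),
    tendsto_log_atTop.eventually_ge_atTop 1, eventually_gt_atTop 0] with x le_exp log_le hL hx
  set L := log x
  have hL0 : 0 < L := zero_lt_one.trans_le hL
  have exponent_le : L ^ (1 - 2 * η) * (8 * log (L ^ (1 - 2 * η)) + 2) - L ^ (1 - η) ≤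
      -L ^ (1 - 2 * η) := by
    have split : L ^ (1 - η) = L ^ (1 - 2 * η) * L ^ η := by rw [← rpow_add hL0]; ring_nf
    have hlog : 8 * log (L ^ (1 - 2 * η)) + 3 ≤ L ^ η := by
      rw [log_rpow hL0]
      nlinarith [mul_nonneg hη.le (log_nonneg hL)]
    have := mul_le_mul_of_nonneg_left hlog (rpow_nonneg hL0.le (1 - 2 * η))
    linarith
  calc C * (exp (L ^ (1 - 2 * η)) ^ (8 * log (L ^ (1 - 2 * η)) + 2) * (x * L / exp (L ^ (1 - η))))
      = C * (x * L ^ (1 : ℝ) *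
          exp (L ^ (1 - 2 * η) * (8 * log (L ^ (1 - 2 * η)) + 2) - L ^ (1 - η))) := by
        rw [← exp_mul, exp_sub, rpow_one]; ring
    _ ≤ C * (x * L ^ (1 : ℝ) * exp (-L ^ (1 - 2 * η))) := by gcongr
    _ ≤ x / L ^ b := const_mul_mul_rpow_mul_exp_neg_le hx.le hL0 le_exp

/-- Rankin's exponent, chosen so that `x ^ α` is `log x ^ (1 + ε / 2)` while `yy ε x ^ α` stays
below a power of `log log x` with exponent less than `1`. -/
noncomputable def rankinExponent (ε x : ℝ) : ℝ := (1 + ε / 2) * log (log x) / log x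

lemma rankinExponent_mul_log {ε x : ℝ} (hL : log x ≠ 0) :
    rankinExponent ε x * log x = (1 + ε / 2) * log (log x) :=
  div_mul_cancel₀ _ hL

lemma rankinExponent_mul_log_yy_le {ε x : ℝ} (hL : log x ≠ 0) (hs : 1 ≤ log (log x)) :
    rankinExponent ε x * log (yy ε x) ≤ (1 - ε / 2) * log (log (log x)) := by
  have hs0 : log (log x) ≠ 0 := by positivity
  have : rankinExponent ε x * log (yy ε x) =
      (1 + ε / 2) * (1 - ε) * log (log (log x)) := by
    rw [rankinExponent, log_yy]
    field_simp
  nlinarith [mul_nonneg (sq_nonneg ε) (log_nonneg hs)]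

lemma yy_rpow_rankinExponent_le {ε x : ℝ} (hL : log x ≠ 0) (hs : 1 ≤ log (log x)) :
    yy ε x ^ rankinExponent ε x ≤ log (log x) ^ (1 - ε / 2) := by
  rw [rpow_def_of_pos (yy_pos ε x), rpow_def_of_pos (by linarith), exp_le_exp, mul_comm,
    mul_comm (log _)]
  exact rankinExponent_mul_log_yy_le hL hs

lemma rankinExponent_nonneg {ε x : ℝ} (hε : 0 ≤ ε) (hL : 1 ≤ log x) : 0 ≤ rankinExponent ε x :=
  div_nonneg (mul_nonneg (by linarith) (log_nonneg hL)) (by linarith)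

lemma mul_log_rpow_one_sub_rankinExponent_le {ε x : ℝ} (hε : 0 ≤ ε) (hx : 0 < x)
    (hL : 1 ≤ log x) :
    (x * log x) ^ (1 - rankinExponent ε x) ≤ x * log x ^ (-(ε / 2)) := by
  have hL0 : 0 < log x := zero_lt_one.trans_le hL
  rw [rpow_def_of_pos (by positivity), log_mul hx.ne' hL0.ne', rpow_def_of_pos hL0]
  nth_rw 4 [← exp_log hx]
  rw [← exp_add, exp_le_exp]
  linarith [rankinExponent_mul_log (ε := ε) hL0.ne',
    mul_nonneg (rankinExponent_nonneg hε hL) (log_nonneg hL)]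

lemma eventually_rankinExponent_le (ε : ℝ) {c : ℝ} (hc : 0 < c) :
    ∀ᶠ x in atTop, rankinExponent ε x ≤ c := by
  have littleO := isLittleO_log_id_atTop.const_mul_left (1 + ε / 2)
  filter_upwards [tendsto_log_atTop.eventually (littleO.bound hc),
    tendsto_log_atTop.eventually_gt_atTop 0] with x hx hL
  rw [norm_eq_abs, id, norm_of_nonneg hL.le] at hx
  exact (div_le_iff₀ hL).2 ((le_abs_self _).trans hx)

lemma rankin_factor_le {ε x : ℝ} (hε : 0 ≤ ε) (hε1 : ε ≤ 1) (hx : 0 < x) (hL : 1 ≤ log x)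
    (hs : 1 ≤ log (log x)) :
    yy ε x ^ rankinExponent ε x * (x * log x) ^ (1 - rankinExponent ε x) * (log (yy ε x) *
        exp (3 * (rankinExponent ε x * yy ε x ^ rankinExponent ε x * log (yy ε x)))) ≤
      log (log x) * (x * log x ^ (-(ε / 2))) *
        (log x * exp (3 * (log (log x) ^ (1 - ε / 2) * log (log (log x))))) := by
  have hL0 : 0 < log x := zero_lt_one.trans_le hL
  have log_y_nonneg := log_yy_nonneg hε1 hL0.le hs
  have log_y_le := log_yy_le hε hε1 hL0.le (zero_lt_one.trans_le hs)
  have rpow_le := yy_rpow_rankinExponent_le (ε := ε) hL0.ne' hs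
  have α_nonneg := rankinExponent_nonneg hε hL
  have α_mul_log_le := rankinExponent_mul_log_yy_le (ε := ε) hL0.ne' hs
  have V_le := mul_log_rpow_one_sub_rankinExponent_le hε hx hL
  have hy := yy_pos ε x
  set s := log (log x)
  set α := rankinExponent ε x
  set y := yy ε x
  have exponent_le : α * y ^ α * log y ≤ s ^ (1 - ε / 2) * log s := by
    rw [mul_comm α, mul_assoc]
    gcongr
    nlinarith [log_nonneg hs]
  have rpow_le_s : y ^ α ≤ s := rpow_le.trans (rpow_le_self_of_one_le hs (by linarith))
  gcongr

lemma eventually_sieve_term_le {C ε : ℝ} (hC : 0 ≤ C) (hε : 0 < ε) (hε1 : ε ≤ 1) :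
    ∀ᶠ x in atTop, C * ((log (log x) / log x ^ (1 - ε / 16)) ^ 2 *
      (yy ε x ^ rankinExponent ε x * (x * log x) ^ (1 - rankinExponent ε x) * (log (yy ε x) *
        exp (3 * (rankinExponent ε x * yy ε x ^ rankinExponent ε x * log (yy ε x)))))) ≤
      x / log x ^ (1 + ε / 8) := by
  filter_upwards [eventually_gt_atTop 0, tendsto_log_atTop.eventually_ge_atTop 1,
    tendsto_log_log_atTop.eventually_ge_atTop 1, tendsto_log_log_atTop.eventually
      (eventually_const_mul_pow_mul_exp_le C 3 (half_pos hε) (show 0 < ε / 4 by linarith))]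
    with x hx hL hs le_exp
  have hL0 : 0 < log x := zero_lt_one.trans_le hL
  have factor_le := rankin_factor_le hε.le hε1 hx hL hs
  set L := log x
  set s := log L
  have L_power : L ^ (-(ε / 2)) * L / (L ^ (1 - ε / 16)) ^ 2 = L ^ (-(1 + 3 * ε / 8)) := by
    rw [← rpow_add_one hL0.ne', ← rpow_mul_natCast hL0.le, ← rpow_sub hL0]
    push_cast
    ring_nf
  calc _ ≤ C * ((s / L ^ (1 - ε / 16)) ^ 2 * (s * (x * L ^ (-(ε / 2))) *
        (L * exp (3 * (s ^ (1 - ε / 2) * log s))))) := by gcongr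
    _ = C * (s ^ 3 * exp (3 * (s ^ (1 - ε / 2) * log s))) *
        (x * (L ^ (-(ε / 2)) * L / (L ^ (1 - ε / 16)) ^ 2)) := by ring
    _ ≤ exp (ε / 4 * s) * (x * L ^ (-(1 + 3 * ε / 8))) := by rw [L_power]; gcongr
    _ = x / L ^ (1 + ε / 8) := by
        rw [mul_comm (ε / 4), ← rpow_def_of_pos hL0, mul_left_comm, ← rpow_add hL0,
          div_eq_mul_inv x, ← rpow_neg hL0.le]
        ring_nf

lemma log_natCast_add_log_mul_log_le {B x : ℝ} {M : ℕ} (hM : 1 ≤ M) (hx : 0 < x)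
    (hL : 0 < log x) (hMx : (M : ℝ) ≤ x ^ B) :
    log M + log (x * log x) ≤ (B + 2) * log x := by
  have log_M_le : log M ≤ B * log x := by
    rw [← log_rpow hx]
    exact log_le_log (by exact_mod_cast hM) hMx
  rw [log_mul hx.ne' hL.ne']
  linarith [log_le_self hL.le]

end Asymptotics

open Filter Finset Real in
theorem stmt7_general {ε : ℝ} (hε : 0 < ε) (hε1 : ε < 1) (CU B : ℝ) :
    ∀ᶠ x : ℝ in atTop, ∀ M : ℕ, 1 ≤ M → (M : ℝ) ≤ x ^ B →
      (#(siftedSmooth M (yy ε x) (UU CU M ε x)) : ℝ) ≤ x / log x ^ (1 + ε / 8) := by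
  obtain ⟨C, hC, card_le⟩ := exists_card_siftedSmooth_le (B + 2)
  have hη : 0 < ε / 32 := by linarith
  have eventually_four_le_rpow {a : ℝ} (ha : 0 < a) : ∀ᶠ x in atTop, 4 ≤ log x ^ a :=
    ((tendsto_rpow_atTop ha).comp tendsto_log_atTop).eventually_ge_atTop 4
  filter_upwards [eventually_smooth_term_le (C := 3 * C) (by positivity) hη (1 + ε / 8),
    eventually_sieve_term_le (C := 3 * C) (by positivity) hε hε1.le,
    eventually_remainder_term_le (C := 3 * C) (by positivity) hη (by linarith) (1 + ε / 8),
    eventually_UU_le_mul_log CU hε.le hε1.le, eventually_two_le_yy hε1,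
    eventually_rankinExponent_le ε (show (0 : ℝ) < 1 / 4 by norm_num),
    eventually_four_le_rpow (show 0 < 1 - 2 * (ε / 32) by linarith),
    eventually_four_le_rpow (show 0 < 1 - ε / 32 by linarith),
    tendsto_log_atTop.eventually_ge_atTop 2, eventually_gt_atTop 0]
    with x smooth_le sieve_le remainder_le hU hy hα hz ht hL hx M hM hMx
  have hL1 : 1 ≤ log x := by linarith
  have hL0 : 0 < log x := by linarith
  have bound := card_le (log x) (exp (log x ^ (1 - 2 * (ε / 32)))) (exp (log x ^ (1 - ε / 32)))
    (yy ε x) (UU CU M ε x) (x * log x) (rankinExponent ε x) M hL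
    (by linarith [add_one_le_exp (log x ^ (1 - 2 * (ε / 32)))])
    (exp_le_exp.2 (rpow_le_rpow_of_exponent_le hL1 (by linarith))) (exp_le_exp.2 ht) hy (hU M)
    (by positivity) (rankinExponent_nonneg hε.le hL1) hα hM
    (log_natCast_add_log_mul_log_le hM hx hL0 hMx)
  simp only [log_exp] at bound
  rw [show 2 * (ε / 32) = ε / 16 by ring] at bound remainder_le
  linarith

/-- The count of `y`-smooth `m ≤ U` with `gcd(m−1, P_M(y)) = 1` is
`≪ x/(log x)^{1+δ}` for some `δ > 0`. -/
theorem stmt7 :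
    ∀ ε : ℝ, 0 < ε → ε < 1 → ∀ CU : ℝ, 0 < CU →
    ∃ κ δ A : ℝ, 0 < κ ∧ 0 < δ ∧ 0 < A ∧ ∃ x₀ : ℝ, ∀ x : ℝ, x ≥ x₀ →
    ∀ M : ℕ, 1 ≤ M → (M : ℝ) ≤ κ * x ^ ((1 : ℝ) / 5) →
    ((((Finset.Icc 1 ⌊UU CU M ε x⌋₊).filter (fun m : ℕ =>
        (∀ p ∈ m.primeFactors, (p : ℝ) ≤ yy ε x) ∧
          Nat.gcd (m - 1) (PM M (yy ε x)) = 1)).card : ℝ))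
      ≤ A * x / (Real.log x) ^ ((1 : ℝ) + δ) := by
  intro ε hε hε1 CU _
  obtain ⟨x₀, hx₀⟩ := Filter.eventually_atTop.1 (stmt7_general hε hε1 CU (1 / 5))
  refine ⟨1, ε / 8, 1, one_pos, by positivity, one_pos, x₀, fun x hx M hM hMx => ?_⟩
  rw [one_mul] at hMx ⊢
  exact hx₀ x hx M hM hMx
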